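/- For every well-formed formula Q and all well-formed formulas A, B of the implicational propositional calculus, the formula QA ⊃ QQ(A ⊃ B), i.e. (A ⊃ Q) ⊃ [((A ⊃ B) ⊃ Q) ⊃ Q], is a theorem of IPC. -/

import Mathlib

/-- Well-formed formulas of the implicational propositional calculus:
propositional variables (indexed by ℕ, so the set of wfs is countable)
and the single connective ⊃. -/
inductive Wf where
  | var : ℕ → Wf
  | imp : Wf → Wf → Wf
deriving DecidableEq

infixr:60 " ⊃' " => Wf.imp

/-- `Deduces Γ A` : `A` is deducible from the set `Γ` of extra axioms/hypotheses,
using the three axiom schemes of IPC (including the Peirce scheme) and modus ponens.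
Theorems of IPC are `Deduces ∅ A`; for an extension `M` of IPC with extra-axiom
set `E`, `T(M)` is `Deduces E`, and deducibility from hypotheses `Γ` in `M` is
`Deduces (E ∪ Γ)`. -/
inductive Deduces : Set Wf → Wf → Prop where
  | hyp : ∀ {Γ : Set Wf} {A : Wf}, A ∈ Γ → Deduces Γ A
  | ax1 : ∀ {Γ : Set Wf} (A B : Wf), Deduces Γ (A ⊃' (B ⊃' A))
  | ax2 : ∀ {Γ : Set Wf} (A B C : Wf),
      Deduces Γ ((A ⊃' (B ⊃' C)) ⊃' ((A ⊃' B) ⊃' (A ⊃' C)))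
  | peirce : ∀ {Γ : Set Wf} (A B : Wf), Deduces Γ (((A ⊃' B) ⊃' A) ⊃' A)
  | mp : ∀ {Γ : Set Wf} {A B : Wf}, Deduces Γ (A ⊃' B) → Deduces Γ A → Deduces Γ B

/-- The deduction theorem. -/
theorem deduction_aux {Δ : Set Wf} {B : Wf} (h : Deduces Δ B) :
    ∀ (Γ : Set Wf) (A : Wf), Δ = insert A Γ → Deduces Γ (A ⊃' B) := by
  induction h with
  | @hyp C hC =>
    intro Γ A e
    subst e
    rcases hC with rfl | hC
    · exact .mp (.mp (.ax2 C (C ⊃' C) C) (.ax1 _ _)) (.ax1 _ _)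
    · exact .mp (.ax1 _ _) (.hyp hC)
  | ax1 C D => intro Γ A _; exact .mp (.ax1 _ _) (.ax1 C D)
  | ax2 C D E => intro Γ A _; exact .mp (.ax1 _ _) (.ax2 C D E)
  | peirce C D => intro Γ A _; exact .mp (.ax1 _ _) (.peirce C D)
  | mp _ _ ih1 ih2 => intro Γ A e; exact .mp (.mp (.ax2 _ _ _) (ih1 Γ A e)) (ih2 Γ A e)

theorem deduction {Γ : Set Wf} {A B : Wf} (h : Deduces (insert A Γ) B) :
    Deduces Γ (A ⊃' B) :=
  deduction_aux h Γ A rfl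

/-- Theorem 1(7): QA ⊃ QQ(A ⊃ B), i.e.
(A ⊃ Q) ⊃ [((A ⊃ B) ⊃ Q) ⊃ Q], is a theorem of IPC. -/
theorem stmt_6 (Q A B : Wf) :
    Deduces ∅ ((A ⊃' Q) ⊃' (((A ⊃' B) ⊃' Q) ⊃' Q)) := by
  apply deduction
  apply deduction
  refine .mp (.peirce Q B) ?_
  apply deduction
  refine .mp (A := A ⊃' B) (.hyp (by simp)) ?_
  apply deduction
  refine .mp (A := Q) (.hyp (by simp)) ?_
  exact .mp (A := A) (.hyp (by simp)) (.hyp (by simp))
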